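/- Let k ≥ 2 and let S_2≀S_k ≤ S_{2k} be the subgroup of permutations mapping each pair {2i−1,2i} (1 ≤ i ≤ k) to some pair {2j−1,2j}; each g ∈ S_2≀S_k induces a permutation ḡ of the set of k pairs. Let S_2≀A_k = {g ∈ S_2≀S_k : ḡ is even}. Then the permutation character of S_{2k} on the cosets of S_2≀A_k is multiplicity-free if and only if there is NO strictly decreasing sequence of positive integers b_1 > b_2 > … > b_s ≥ 1 (with s ≥ 1) such that k = 4(b_1 + … + b_s) + s or k = 4(b_1 + … + b_s) + s + 1. -/

import Mathlib

/-- The permutation character of `G` on the cosets of `H` is multiplicity-free: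
every irreducible complex representation of `G` has at most a one-dimensional
subspace of `H`-fixed vectors. -/
noncomputable def IsMultFree {G : Type} [Group G] (H : Subgroup G) : Prop :=
  ∀ V : FDRep ℂ G, CategoryTheory.Simple V →
    Module.finrank ℂ (Representation.invariants (V.ρ.comp H.subtype)) ≤ 1

/-- `σ` is the permutation of the `k` pairs `{2i−1, 2i}` of `{1,…,2k}` induced by the
permutation `g` (so `g` maps each pair onto a pair, pair `j` going to pair `σ j`). -/
def InducedPairPerm {k : ℕ} (g : Equiv.Perm (Fin (2 * k))) (σ : Equiv.Perm (Fin k)) : Prop :=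
  ∀ i : Fin (2 * k), ((g i : ℕ) / 2) = (σ ⟨(i : ℕ) / 2, by have := i.isLt; omega⟩ : ℕ)

/-!
Let `K = S_2 ≀ S_k ≤ G = S_{2k}` and let `χ : K → {±1}` be the sign of the induced permutation of
the pairs, so that `H = ker χ`. For every `g ∈ G` there is `l ∈ K` with `g⁻¹ = l g l`. If
`K ∩ g K g⁻¹` contains an element with `χ = -1`, this sharpens to `g⁻¹ ∈ H g H`; if that holds for
every `g`, then `H` is multiplicity-free by Gelfand's trick. If instead `χ = 1` on `K ∩ g K g⁻¹`
for some `g`, then `e_χ g e_1 ≠ 0` in the group algebra, where `e_χ` and `e_1` sum `K` against `χ`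
and `1`. Some irreducible representation then contains a `K`-fixed vector and a vector on which `K`
acts by `χ`, hence two independent `H`-fixed vectors.

Splitting every pair into a left and a right point, each double coset `K g K` has a representative
that permutes the right points by some `σ ∈ S_k` and fixes the left points. The pair permutations
arising from `K ∩ g K g⁻¹` are then the `τ` for which `τ σ τ⁻¹` is obtained from `σ` by inverting
some of its cycles. They include the centralizer of `σ`, which consists of even permutations iff
the cycle lengths (fixed points included) are odd and distinct, and, for each odd cycle of length
`c`, a reflection of that cycle, a product of `(c - 1) / 2` transpositions. Hence all of them are
even iff the cycle lengths are distinct and congruent to `1` modulo `4`, and a `σ` with this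
property has cycle lengths `4 b_i + 1` with distinct `b_i > 0`, and at most one fixed point.
-/

open CategoryTheory

section Representation

variable {k G L V : Type*} [Group G] [Group L]

theorem isIrreducible_iff_exists_asAlgebraHom_apply_eq [Field k] [AddCommGroup V] [Module k V]
    (ρ : Representation k G V) :
    ρ.IsIrreducible ↔ Nontrivial V ∧ ∀ v w : V, v ≠ 0 → ∃ x, ρ.asAlgebraHom x v = w := by
  rw [Representation.irreducible_iff_isSimpleModule_asModule,
    isSimpleModule_iff_toSpanSingleton_surjective]
  refine and_congr Iff.rfl ⟨fun h v w hv => ?_, fun h v hv w => ?_⟩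
  · obtain ⟨x, hx⟩ := h (ρ.asModuleEquiv.symm v) (by simpa using hv) (ρ.asModuleEquiv.symm w)
    exact ⟨x, (ρ.asModuleEquiv_map_smul x _).symm.trans (congrArg ρ.asModuleEquiv hx)⟩
  · obtain ⟨x, hx⟩ := h (ρ.asModuleEquiv v) (ρ.asModuleEquiv w) (by simpa using hv)
    exact ⟨x, ρ.asModuleEquiv.injective ((ρ.asModuleEquiv_map_smul x v).trans hx)⟩

theorem finrank_le_one_of_commute_of_transitive [Field k] [IsAlgClosed k] [AddCommGroup V]
    [Module k V] [FiniteDimensional k V] {ι : Type*} (T : ι → Module.End k V)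
    (hcomm : ∀ x y, Commute (T x) (T y)) (htrans : ∀ v w, v ≠ 0 → ∃ x, T x v = w) :
    Module.finrank k V ≤ 1 := by
  rcases subsingleton_or_nontrivial V with _ | _
  · simp [Module.finrank_zero_of_subsingleton]
  obtain ⟨v, hv⟩ := exists_ne (0 : V)
  refine finrank_le_one v fun w => ?_
  obtain ⟨x, rfl⟩ := htrans v w hv
  obtain ⟨c, hc⟩ := Module.End.exists_eigenvalue (T x)
  obtain ⟨u, hu⟩ := hc.exists_hasEigenvector
  obtain ⟨y, rfl⟩ := htrans u v hu.2
  refine ⟨c, ?_⟩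
  have hxy : T x (T y u) = T y (T x u) := LinearMap.congr_fun (hcomm x y) u
  rw [hxy, hu.apply_eq_smul, map_smul]

/-- The element `∑ l, χ l • i l` of the group algebra of `G`: up to the scalar `|L|`, the
idempotent projecting a representation of `G` onto the vectors on which `L`, acting through
`i : L →* G`, acts by the sign character `χ`. -/
noncomputable def charSum (k : Type*) [CommRing k] [Fintype L] (i : L →* G) (χ : L →* ℤˣ) :
    MonoidAlgebra k G :=
  ∑ l, ((χ l : ℤ) : k) • MonoidAlgebra.of k G (i l)

section CharSum

open MonoidAlgebra (of)

variable [CommRing k] [Fintype L] (i : L →* G) (χ : L →* ℤˣ)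

theorem of_mul_charSum (l : L) :
    of k G (i l) * charSum k i χ = ((χ l : ℤ) : k) • charSum k i χ := by
  simp only [charSum, Finset.mul_sum, Finset.smul_sum, mul_smul_comm, ← map_mul, smul_smul]
  refine Fintype.sum_equiv (Equiv.mulLeft l) _ _ fun m => ?_
  rw [Equiv.coe_mulLeft, ← Int.cast_mul, ← Units.val_mul, ← map_mul χ, map_mul χ, map_mul χ,
    ← mul_assoc, Int.units_mul_self, one_mul]

theorem charSum_mul_of (l : L) :
    charSum k i χ * of k G (i l) = ((χ l : ℤ) : k) • charSum k i χ := by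
  simp only [charSum, Finset.sum_mul, Finset.smul_sum, smul_mul_assoc, ← map_mul, smul_smul]
  refine Fintype.sum_equiv (Equiv.mulRight l) _ _ fun m => ?_
  rw [Equiv.coe_mulRight, ← Int.cast_mul, ← Units.val_mul, map_mul χ, mul_comm (χ m),
    ← mul_assoc, Int.units_mul_self, one_mul]

theorem antipode_of (g : G) : HopfAlgebra.antipode k (of k G g) = of k G g⁻¹ := by
  simp [MonoidAlgebra.of_apply, MonoidAlgebra.antipode_single]

theorem antipode_charSum : HopfAlgebra.antipode k (charSum k i χ) = charSum k i χ := by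
  simp only [charSum, map_sum, map_smul, antipode_of]
  exact Fintype.sum_equiv (Equiv.inv L) _ _ fun l => by simp

theorem antipode_charSum_mul_mul_charSum
    (hsymm : ∀ g, ∃ l l', g⁻¹ = i l * g * i l' ∧ χ l = χ l') (x : MonoidAlgebra k G) :
    HopfAlgebra.antipode k (charSum k i χ * x * charSum k i χ) =
      charSum k i χ * x * charSum k i χ := by
  simp only [HopfAlgebra.antipode_mul_antidistrib, antipode_charSum]
  induction x using MonoidAlgebra.induction_on with
  | of g =>
    obtain ⟨l, l', hg, hl⟩ := hsymm g
    calc charSum k i χ * (HopfAlgebra.antipode k (of k G g) * charSum k i χ)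
        = charSum k i χ * of k G (i l) * of k G g * (of k G (i l') * charSum k i χ) := by
          rw [antipode_of, hg, map_mul, map_mul]; simp only [mul_assoc]
      _ = (((χ l * χ l' : ℤˣ) : ℤ) : k) • (charSum k i χ * of k G g * charSum k i χ) := by
          rw [of_mul_charSum, charSum_mul_of]
          simp [smul_smul, mul_comm]
      _ = charSum k i χ * of k G g * charSum k i χ := by simp [hl]
  | add x y hx hy => simp only [map_add, add_mul, mul_add, hx, hy]
  | smul c x hx => simp only [map_smul, smul_mul_assoc, mul_smul_comm, hx]

/-- An anti-automorphism fixing a subalgebra pointwise makes it commutative. -/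
theorem commute_charSum_mul_mul_charSum
    (hsymm : ∀ g, ∃ l l', g⁻¹ = i l * g * i l' ∧ χ l = χ l') (x y : MonoidAlgebra k G) :
    Commute (charSum k i χ * x * charSum k i χ) (charSum k i χ * y * charSum k i χ) := by
  set e := charSum k i χ
  have hfix := antipode_charSum_mul_mul_charSum (k := k) i χ hsymm
  calc e * x * e * (e * y * e)
      = e * (x * e * e * y) * e := by simp only [mul_assoc]
    _ = HopfAlgebra.antipode k (e * x * e * (e * y * e)) := by
      rw [← hfix]; simp only [mul_assoc, e]
    _ = e * y * e * (e * x * e) := by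
      rw [HopfAlgebra.antipode_mul_antidistrib, hfix, hfix]

end CharSum

section Invariants

variable [Field k] [AddCommGroup V] [Module k V] (ρ : Representation k G V) (H : Subgroup G)

theorem mem_invariants_subgroup {v : V} :
    v ∈ Representation.invariants (ρ.comp H.subtype) ↔ ∀ h ∈ H, ρ h v = v :=
  (Representation.mem_invariants _ v).trans Subtype.forall

theorem asAlgebraHom_charSum_one_mem_invariants [Fintype H] (v : V) :
    ρ.asAlgebraHom (charSum k H.subtype 1) v ∈ Representation.invariants (ρ.comp H.subtype) := by
  refine (mem_invariants_subgroup ρ H).2 fun h hh => ?_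
  have habs := of_mul_charSum (k := k) H.subtype 1 ⟨h, hh⟩
  simp only [Subgroup.coe_subtype, MonoidHom.one_apply, Units.val_one, Int.cast_one,
    one_smul] at habs
  rw [← ρ.asAlgebraHom_of, ← Module.End.mul_apply, ← map_mul, habs]

theorem asAlgebraHom_charSum_one_apply [Fintype H] {v : V}
    (hv : v ∈ Representation.invariants (ρ.comp H.subtype)) :
    ρ.asAlgebraHom (charSum k H.subtype 1) v = (Fintype.card H : k) • v := by
  have hfix (h : H) : ρ h v = v := (mem_invariants_subgroup ρ H).1 hv h h.2
  simp only [charSum, MonoidHom.one_apply, Units.val_one, Int.cast_one, one_smul, map_sum,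
    Representation.asAlgebraHom_of, LinearMap.sum_apply, Subgroup.coe_subtype, hfix]
  simp [Nat.cast_smul_eq_nsmul]

/-- Gelfand's trick. -/
theorem finrank_invariants_le_one_of_inv_mem_doubleCoset [IsAlgClosed k] [CharZero k]
    [FiniteDimensional k V] [Finite H] (hρ : ρ.IsIrreducible)
    (hsymm : ∀ g : G, ∃ h₁ ∈ H, ∃ h₂ ∈ H, g⁻¹ = h₁ * g * h₂) :
    Module.finrank k (Representation.invariants (ρ.comp H.subtype)) ≤ 1 := by
  have := Fintype.ofFinite H
  set e := charSum k H.subtype 1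
  have hcard : (Fintype.card H : k) ≠ 0 := by simp
  have hmem (x : MonoidAlgebra k G) (v : V) : ρ.asAlgebraHom (e * x * e) v ∈
      Representation.invariants (ρ.comp H.subtype) := by
    simpa only [mul_assoc, map_mul] using! asAlgebraHom_charSum_one_mem_invariants ρ H _
  refine finrank_le_one_of_commute_of_transitive
    (fun x => (ρ.asAlgebraHom (e * x * e)).restrict fun v _ => hmem x v) (fun x y => ?_)
    fun v w hv => ?_
  · have hcomm := commute_charSum_mul_mul_charSum (k := k) H.subtype 1 (fun g => by
      obtain ⟨h₁, hh₁, h₂, hh₂, hg⟩ := hsymm g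
      exact ⟨⟨h₁, hh₁⟩, ⟨h₂, hh₂⟩, hg, rfl⟩) x y
    refine LinearMap.ext fun v => Subtype.ext ?_
    exact LinearMap.congr_fun (hcomm.map ρ.asAlgebraHom) (v : V)
  · obtain ⟨x, hx⟩ := ((isIrreducible_iff_exists_asAlgebraHom_apply_eq ρ).1 hρ).2 (v : V) (w : V)
      (by simpa using hv)
    refine ⟨((Fintype.card H : k)⁻¹ * (Fintype.card H : k)⁻¹) • x, Subtype.ext ?_⟩
    have hv' := asAlgebraHom_charSum_one_apply ρ H v.2
    have hw' := asAlgebraHom_charSum_one_apply ρ H w.2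
    simp only [LinearMap.coe_restrict_apply, map_mul, map_smul, Module.End.mul_apply,
      LinearMap.smul_apply]
    rw [hv', map_smul, hx, map_smul, hw', smul_smul, smul_smul]
    field_simp
    exact one_smul k _

end Invariants
end Representation

section MultFree

universe u

open MonoidAlgebra (of)

theorem isIrreducible_of_simple {k G : Type u} [Field k] [Group G] (V : FDRep k G)
    [Simple V] : Representation.IsIrreducible V.ρ where
  exists_pair_ne := by
    have : Nontrivial V := by
      by_contra hV
      rw [not_nontrivial_iff_subsingleton] at hV
      refine id_nonzero V ?_
      ext v
      exact Subsingleton.elim _ _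
    refine ⟨⊥, ⊤, fun h => bot_ne_top (α := Submodule k V) ?_⟩
    exact congrArg Subrepresentation.toSubmodule h
  eq_bot_or_eq_top W := by
    let f : FDRep.of W.toRepresentation ⟶ V :=
      ⟨InducedCategory.homMk (ModuleCat.ofHom W.toSubmodule.subtype), fun g => by ext x; rfl⟩
    have hmono : Mono f := by
      apply (forget (FDRep k G)).mono_of_mono_map
      exact (mono_iff_injective _).2 Subtype.val_injective
    refine or_iff_not_imp_left.2 fun hW => ?_
    have hf : f ≠ 0 := by
      rintro h
      refine hW (Subrepresentation.ext (Submodule.eq_bot_iff _ |>.2 fun w hw => ?_))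
      exact congrArg (fun φ : FDRep.of W.toRepresentation ⟶ V => φ.hom.hom.hom ⟨w, hw⟩) h
    have := isIso_of_mono_of_nonzero hf
    have hsurj := ((isIso_iff_bijective ((forget (FDRep k G)).map f)).1 inferInstance).2
    refine Subrepresentation.ext (eq_top_iff.2 fun v _ => ?_)
    obtain ⟨w, rfl⟩ := hsurj v
    exact w.2

theorem simple_of_isIrreducible {k G : Type u} [Field k] [IsAlgClosed k] [Group G]
    [Finite G] [NeZero (Nat.card G : k)] (V : FDRep k G)
    (hV : Representation.IsIrreducible V.ρ) : Simple V := by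
  rw [FDRep.simple_iff_end_is_rank_one,
    (Representation.linHom.invariantsEquivFDRepHom V V).symm.finrank_eq,
    (Representation.invariantsEquivIntertwiningMap V.ρ V.ρ).finrank_eq]
  exact Representation.IsIrreducible.finrank_intertwiningMap_self V.ρ

theorem exists_isSimpleModule_smul_ne_zero {R : Type*} [Ring R] [IsSemisimpleRing R] {f : R}
    (hf : f ≠ 0) : ∃ S : Submodule R R, IsSimpleModule R S ∧ ∃ s : S, f • s ≠ 0 := by
  by_contra! hzero
  have hann (x : R) (hx : x ∈ sSup {S : Submodule R R | IsSimpleModule R S}) : f * x = 0 := by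
    rw [sSup_eq_iSup'] at hx
    induction hx using Submodule.iSup_induction' with
    | mem S x hx => exact congrArg Subtype.val (hzero S S.2 ⟨x, hx⟩)
    | zero => exact mul_zero f
    | add x y _ _ hx hy => rw [mul_add, hx, hy, add_zero]
  rw [IsSemisimpleModule.sSup_simples_eq_top] at hann
  exact hf (by simpa using hann 1 Submodule.mem_top)

theorem exists_simple_asAlgebraHom_ne_zero {k G : Type} [Field k] [IsAlgClosed k] [Group G]
    [Finite G] [NeZero (Nat.card G : k)] {f : MonoidAlgebra k G} (hf : f ≠ 0) :
    ∃ V : FDRep k G, Simple V ∧ Representation.asAlgebraHom V.ρ f ≠ 0 := by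
  obtain ⟨S, hS, s, hs⟩ := exists_isSimpleModule_smul_ne_zero hf
  have : Module.Finite k S := inferInstanceAs (Module.Finite k (S.restrictScalars k))
  set ρ : Representation k G S := Representation.ofModule' S
  have hρ (x : MonoidAlgebra k G) (v : S) : ρ.asAlgebraHom x v = x • v :=
    LinearMap.congr_fun (DFunLike.congr_fun ((MonoidAlgebra.lift k _ G).apply_symm_apply _) x) v
  refine ⟨FDRep.of ρ, simple_of_isIrreducible _ ?_, fun h => hs ?_⟩
  · refine (isIrreducible_iff_exists_asAlgebraHom_apply_eq ρ).2
      ⟨hS.nontrivial, fun v w hv => ?_⟩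
    obtain ⟨x, hx⟩ := IsSimpleModule.toSpanSingleton_surjective (MonoidAlgebra k G) hv w
    exact ⟨x, (hρ x v).trans hx⟩
  · exact (hρ f s).symm.trans (LinearMap.congr_fun h s)

theorem charSum_mul_of_mul_charSum_one_ne_zero {k G L : Type*} [Field k] [CharZero k] [Group G]
    [Group L] [Fintype L] (i : L →* G) (χ : L →* ℤˣ) {g : G}
    (hg : ∀ l l', i l * g * i l' = g → χ l = 1) :
    charSum k i χ * of k G g * charSum k i 1 ≠ 0 := by
  classical
  have hcoeff : (charSum k i χ * of k G g * charSum k i 1).coeff g =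
      ((Finset.univ.filter fun p : L × L => i p.1 * g * i p.2 = g).card : k) := by
    rw [Finset.natCast_card_filter, Fintype.sum_prod_type, charSum, charSum, Finset.sum_mul,
      Finset.sum_mul_sum]
    simp only [smul_mul_assoc, mul_smul_comm, ← map_mul, MonoidAlgebra.coeff_sum,
      Finset.sum_apply']
    refine Finset.sum_congr rfl fun l _ => Finset.sum_congr rfl fun l' _ => ?_
    by_cases hll : i l * g * i l' = g <;> simp [hll, hg l l']
  intro h
  rw [h] at hcoeff
  have hempty : (Finset.univ.filter fun p : L × L => i p.1 * g * i p.2 = g).card = 0 := by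
    simpa using hcoeff.symm
  exact Finset.card_ne_zero_of_mem (a := (1, 1)) (by simp) hempty

theorem exists_inv_eq_mul_mul_of_exists_neg_one {G L : Type*} [Group G] [Group L] (i : L →* G)
    (χ : L →* ℤˣ) {g : G} {l a b : L} (hinv : g⁻¹ = i l * g * i l) (hab : i a * g * i b = g)
    (ha : χ a = -1) : ∃ m m', χ m = 1 ∧ χ m' = 1 ∧ g⁻¹ = i m * g * i m' := by
  -- Inverting `a g b = g` and rewriting `g⁻¹` gives the solution `(l⁻¹ b⁻¹ l, l a⁻¹ l⁻¹)`,
  -- whose signs are those of `(b, a)`.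
  have hba : i (l⁻¹ * b⁻¹ * l) * g * i (l * a⁻¹ * l⁻¹) = g := by
    calc i (l⁻¹ * b⁻¹ * l) * g * i (l * a⁻¹ * l⁻¹)
        = (i l)⁻¹ * ((i b)⁻¹ * (i l * g * i l) * (i a)⁻¹) * (i l)⁻¹ := by
          simp only [map_mul, map_inv, mul_assoc]
      _ = (i l)⁻¹ * (i a * g * i b)⁻¹ * (i l)⁻¹ := by rw [← hinv]; group
      _ = g := by rw [hab, hinv]; group
  rcases Int.units_eq_one_or (χ l) with hl | hl
  · exact ⟨l, l, hl, hl, hinv⟩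
  rcases Int.units_eq_one_or (χ b) with hb | hb
  · refine ⟨l * a * (l⁻¹ * b⁻¹ * l), l * a⁻¹ * l⁻¹ * b * l, by simp [hl, ha, hb],
      by simp [hl, ha, hb], ?_⟩
    calc g⁻¹ = i l * (i a * (i (l⁻¹ * b⁻¹ * l) * g * i (l * a⁻¹ * l⁻¹)) * i b) * i l := by
          rw [hba, hab, hinv]
      _ = _ := by simp only [map_mul, mul_assoc]
  · refine ⟨l * a, b * l, by simp [hl, ha], by simp [hl, hb], ?_⟩
    calc g⁻¹ = i l * (i a * g * i b) * i l := by rw [hab, hinv]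
      _ = _ := by simp only [map_mul, mul_assoc]

theorem one_lt_finrank_of_apply_eq_self_of_apply_eq_neg {k V : Type*} [Field k] [CharZero k]
    [AddCommGroup V] [Module k V] [FiniteDimensional k V] (T : Module.End k V) {W : Submodule k V}
    {w u : V} (hw : w ∈ W) (hu : u ∈ W) (hw0 : w ≠ 0) (hu0 : u ≠ 0) (hTw : T w = w)
    (hTu : T u = -u) : 1 < Module.finrank k W := by
  by_contra! hle
  have hw0' : (⟨w, hw⟩ : W) ≠ 0 := fun h => hw0 (congrArg Subtype.val h)
  have := nontrivial_of_ne _ _ hw0'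
  obtain ⟨c, hc⟩ := exists_smul_eq_of_finrank_eq_one
    (le_antisymm hle Module.finrank_pos) hw0' ⟨u, hu⟩
  have hcw : c • w = u := congrArg Subtype.val hc
  have hfix : T u = u := by rw [← hcw, map_smul, hTw]
  have : IsAddTorsionFree V := .of_isTorsionFree k V
  exact hu0 (self_eq_neg.1 (hfix.symm.trans hTu))

theorem not_isMultFree_map_ker {G L : Type} [Group G] [Finite G] [Group L] [Finite L] (i : L →* G)
    (χ : L →* ℤˣ) {t : L} (ht : χ t = -1) {g : G} (hg : ∀ l l', i l * g * i l' = g → χ l = 1) :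
    ¬ IsMultFree (χ.ker.map i) := by
  intro hmf
  have := Fintype.ofFinite L
  obtain ⟨V, hV, hact⟩ := exists_simple_asAlgebraHom_ne_zero
    (charSum_mul_of_mul_charSum_one_ne_zero (k := ℂ) i χ hg)
  obtain ⟨v, hv⟩ := DFunLike.ne_iff.1 hact
  set φ := Representation.asAlgebraHom V.ρ
  set w : V := φ (charSum ℂ i 1) v
  set u : V := φ (charSum ℂ i χ * of ℂ G g * charSum ℂ i 1) v
  change u ≠ 0 at hv
  have hρw (l : L) : V.ρ (i l) w = w := by
    rw [← Representation.asAlgebraHom_of, ← Module.End.mul_apply, ← map_mul, of_mul_charSum]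
    simp [w, φ]
  have hρu (l : L) : V.ρ (i l) u = ((χ l : ℤ) : ℂ) • u := by
    rw [← Representation.asAlgebraHom_of, ← Module.End.mul_apply, ← map_mul, mul_assoc,
      ← mul_assoc, of_mul_charSum, smul_mul_assoc, map_smul, ← mul_assoc, LinearMap.smul_apply]
  have huw : u = φ (charSum ℂ i χ * of ℂ G g) w := by simp only [u, map_mul]; rfl
  have hw0 : w ≠ 0 := fun h => hv (by rw [huw, h, map_zero])
  set I := Representation.invariants (V.ρ.comp (χ.ker.map i).subtype)
  have hwI : w ∈ I := by
    rw [mem_invariants_subgroup]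
    rintro _ ⟨l, -, rfl⟩
    exact hρw l
  have huI : u ∈ I := by
    rw [mem_invariants_subgroup]
    rintro _ ⟨l, hl, rfl⟩
    simp [hρu, MonoidHom.mem_ker.1 hl]
  refine (hmf V hV).not_gt
    (one_lt_finrank_of_apply_eq_self_of_apply_eq_neg (V.ρ (i t)) hwI huI hw0 hv (hρw t) ?_)
  simp [hρu, ht]

theorem isMultFree_map_ker_iff {G L : Type} [Group G] [Finite G] [Group L] [Finite L] (i : L →* G)
    (χ : L →* ℤˣ) (hχ : ∃ t, χ t = -1) (hinv : ∀ g, ∃ l, g⁻¹ = i l * g * i l) :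
    IsMultFree (χ.ker.map i) ↔ ∀ g, ∃ l l', i l * g * i l' = g ∧ χ l = -1 := by
  constructor
  · obtain ⟨t, ht⟩ := hχ
    contrapose!
    rintro ⟨g, hg⟩
    exact not_isMultFree_map_ker i χ ht fun l l' hl =>
      (Int.units_eq_one_or _).resolve_right (hg l l' hl)
  · intro h V hV
    refine finrank_invariants_le_one_of_inv_mem_doubleCoset V.ρ _ (isIrreducible_of_simple V)
      fun g => ?_
    obtain ⟨l, hl⟩ := hinv g
    obtain ⟨a, b, hab, ha⟩ := h g
    obtain ⟨m, m', hm, hm', hg⟩ := exists_inv_eq_mul_mul_of_exists_neg_one i χ hl hab ha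
    exact ⟨i m, ⟨m, hm, rfl⟩, i m', ⟨m', hm', rfl⟩, hg⟩

theorem isMultFree_map_ker_iff_of_doubleCoset_reps {G L ι : Type} [Group G] [Finite G] [Group L]
    [Finite L] (i : L →* G) (χ : L →* ℤˣ) (hχ : ∃ t, χ t = -1) (r : ι → G)
    (hr : ∀ g, ∃ j l l', i l * g * i l' = r j) (hinv : ∀ j, ∃ l, (r j)⁻¹ = i l * r j * i l) :
    IsMultFree (χ.ker.map i) ↔ ∀ j, ∃ l l', i l * r j = r j * i l' ∧ χ l = -1 := by
  rw [isMultFree_map_ker_iff i χ hχ]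
  · refine ⟨fun h j => ?_, fun h g => ?_⟩
    · obtain ⟨a, b, hab, ha⟩ := h (r j)
      exact ⟨a, b⁻¹, by rw [map_inv, eq_mul_inv_iff_mul_eq, hab], ha⟩
    · obtain ⟨j, l, l', hg⟩ := hr g
      obtain ⟨a, b, hab, ha⟩ := h j
      refine ⟨l⁻¹ * a * l, l' * b⁻¹ * l'⁻¹, ?_, by simp [ha]⟩
      calc i (l⁻¹ * a * l) * g * i (l' * b⁻¹ * l'⁻¹)
          = (i l)⁻¹ * (i a * (i l * g * i l')) * (i b)⁻¹ * (i l')⁻¹ := by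
            simp only [map_mul, map_inv, mul_assoc]
        _ = g := by rw [hg, hab, ← hg]; group
  · intro g
    obtain ⟨j, l, l', hg⟩ := hr g
    obtain ⟨m, hm⟩ := hinv j
    refine ⟨l' * m * l, ?_⟩
    calc g⁻¹ = i l' * (i l * g * i l')⁻¹ * i l := by group
      _ = i l' * (i m * (i l * g * i l') * i m) * i l := by rw [hg, hm]
      _ = _ := by simp only [map_mul, mul_assoc]

end MultFree

open Equiv

section Involutions

theorem exists_bool_apply_eq_not {X : Type*} {f : X → X} (hf : Function.Involutive f)
    (hfix : ∀ x, f x ≠ x) : ∃ d : X → Bool, ∀ x, d (f x) = !d x := by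
  classical
  let _ : LinearOrder X := linearOrderOfSTO WellOrderingRel
  refine ⟨fun x => decide (x < f x), fun x => ?_⟩
  rcases lt_or_gt_of_ne (hfix x) with h | h <;> simp [hf x, h, h.le]

theorem apply_zpow_mul_apply {X : Type*} {a b : Perm X} (ha : a * a = 1) (hb : b * b = 1) (n : ℤ)
    (x : X) : a (((a * b) ^ n) x) = ((a * b) ^ (-n)) (a x) := by
  have hinv : a * (a * b) * a⁻¹ = (a * b)⁻¹ := by
    rw [mul_inv_rev, inv_eq_of_mul_eq_one_left hb, ← mul_assoc, ha, one_mul]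
  rw [zpow_neg, ← inv_zpow, ← hinv, conj_zpow]
  simp

theorem not_sameCycle_mul_apply {X : Type*} {a b : Perm X} (ha : a * a = 1) (hb : b * b = 1)
    (hafix : ∀ x, a x ≠ x) (hbfix : ∀ x, b x ≠ x) (x : X) : ¬ (a * b).SameCycle x (a x) := by
  rintro ⟨n, hn⟩
  -- If `(a b) ^ n` maps `x` to `a x`, then `a` or `b` fixes a point half-way between them.
  obtain ⟨m, rfl | rfl⟩ := Int.even_or_odd' n
  · refine hafix (((a * b) ^ m) x) ?_
    rw [apply_zpow_mul_apply ha hb, ← hn, ← Perm.mul_apply, ← zpow_add]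
    congr 2
    ring
  · refine hbfix (((a * b) ^ m) x) (a.injective ?_)
    calc a (b (((a * b) ^ m) x)) = ((a * b) ^ (1 + m)) x := by rw [zpow_add, zpow_one]; rfl
      _ = ((a * b) ^ (-m)) (a x) := by
        rw [← hn, ← Perm.mul_apply, ← zpow_add]; congr 2; ring
      _ = a (((a * b) ^ m) x) := (apply_zpow_mul_apply ha hb m x).symm

theorem exists_bool_apply_eq_not_and {X : Type*} {a b : Perm X} (ha : a * a = 1) (hb : b * b = 1)
    (hafix : ∀ x, a x ≠ x) (hbfix : ∀ x, b x ≠ x) :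
    ∃ d : X → Bool, (∀ x, d (a x) = !d x) ∧ ∀ x, d (b x) = !d x := by
  have hab (x : X) : (a * b) (b x) = a x := congrArg a (Perm.congr_fun hb x)
  let S := Perm.SameCycle.setoid (a * b)
  have hmap {x y : X} : (a * b).SameCycle x y → (a * b).SameCycle (a x) (a y) := by
    rintro ⟨n, rfl⟩
    exact ⟨-n, (apply_zpow_mul_apply ha hb n x).symm⟩
  let f : Quotient S → Quotient S := Quotient.map a fun x y => hmap
  have hf : Function.Involutive f := by
    rintro ⟨x⟩
    exact congrArg (Quotient.mk S) (Perm.congr_fun ha x)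
  obtain ⟨d, hd⟩ := exists_bool_apply_eq_not hf (by
    rintro ⟨x⟩ h
    exact not_sameCycle_mul_apply ha hb hafix hbfix x (Quotient.exact h).symm)
  refine ⟨fun x => d (Quotient.mk S x), fun x => hd (Quotient.mk S x), fun x => ?_⟩
  have hba : Quotient.mk S (b x) = f (Quotient.mk S x) :=
    Quotient.sound ⟨1, by rw [zpow_one, hab]⟩
  exact (congrArg d hba).trans (hd _)

end Involutions

section Pairs

variable {Y : Type*}

/-- The element of the wreath product `S_2 ≀ Sym Y`, acting on the union `Y × Bool` of the pairs
`{y} × Bool`, that permutes the pairs by `τ` and swaps the two points of the pair of `y` on the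
way if `f y` is true. -/
def signedPerm (τ : Perm Y) (f : Y → Bool) : Perm (Y × Bool) :=
  prodShear τ fun y => bif f y then boolNot else Equiv.refl Bool

/-- The permutation of `Y × Bool` acting as `σ` on `Y × {true}` and trivially on `Y × {false}`;
these represent all double cosets of the stabilizer of the pairs. -/
def twist (σ : Perm Y) : Perm (Y × Bool) :=
  prodCongrLeft fun s => bif s then σ else 1

/-- The wreath product `S_2 ≀ Sym Y`, encoded as the group of pairs `(g, τ)` in which `g` permutes
the pairs `{y} × Bool` by `τ`. -/
def pairGroup (Y : Type*) : Subgroup (Perm (Y × Bool) × Perm Y) where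
  carrier := {p | ∀ x, (p.1 x).1 = p.2 x.1}
  mul_mem' {p q} hp hq x := by simp [hp (q.1 x), hq x]
  one_mem' x := rfl
  inv_mem' {p} hp x := by
    have := hp (p.1⁻¹ x)
    simp_all

theorem signedPerm_apply (τ : Perm Y) (f : Y → Bool) (y : Y) (s : Bool) :
    signedPerm τ f (y, s) = (τ y, f y ^^ s) := by
  cases h : f y <;> simp [signedPerm, prodShear, h]

theorem twist_apply (σ : Perm Y) (y : Y) (s : Bool) :
    twist σ (y, s) = (bif s then σ y else y, s) := by
  cases s <;> rfl

theorem mem_pairGroup_iff {g : Perm (Y × Bool)} {τ : Perm Y} :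
    (g, τ) ∈ pairGroup Y ↔ ∃ f, g = signedPerm τ f := by
  constructor
  · intro h
    refine ⟨fun y => (g (y, false)).2, Equiv.ext fun ⟨y, s⟩ => ?_⟩
    rw [signedPerm_apply]
    refine Prod.ext (h (y, s)) ?_
    have hne : (g (y, true)).2 ≠ (g (y, false)).2 := fun h2 => by
      have := g.injective (Prod.ext ((h (y, true)).trans (h (y, false)).symm) h2)
      simp at this
    cases s
    · simp
    · simpa using Bool.eq_not_of_ne hne
  · rintro ⟨f, rfl⟩ ⟨y, s⟩
    rw [signedPerm_apply]

theorem exists_eq_prodCongrLeft {β : Type*} {h : Perm (Y × β)} (hh : ∀ x, (h x).2 = x.2) :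
    ∃ σ : β → Perm Y, h = prodCongrLeft σ := by
  have hh' (x : Y × β) : (h.symm x).2 = x.2 := by simpa using (hh (h.symm x)).symm
  refine ⟨fun s => ⟨fun y => (h (y, s)).1, fun y => (h.symm (y, s)).1, fun y => ?_, fun y => ?_⟩,
    Equiv.ext fun x => Prod.ext rfl (hh x)⟩
  · have : ((h (y, s)).1, s) = h (y, s) := Prod.ext rfl (hh (y, s)).symm
    simp [this]
  · have : ((h.symm (y, s)).1, s) = h.symm (y, s) := Prod.ext rfl (hh' (y, s)).symm
    simp [this]

theorem exists_signedPerm_mul_mul_signedPerm_eq_twist (g : Perm (Y × Bool)) :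
    ∃ τ f τ' f' σ, signedPerm τ f * g * signedPerm τ' f' = twist σ := by
  let a : Perm (Y × Bool) := signedPerm 1 fun _ => true
  have ha_apply (y : Y) (s : Bool) : a (y, s) = (y, !s) := by simp [a, signedPerm_apply]
  have ha : a * a = 1 := Equiv.ext fun ⟨y, s⟩ => by simp [ha_apply]
  have hafix (x : Y × Bool) : a x ≠ x := by obtain ⟨y, s⟩ := x; simp [ha_apply]
  have hb : g⁻¹ * a * g * (g⁻¹ * a * g) = 1 := by
    calc g⁻¹ * a * g * (g⁻¹ * a * g) = g⁻¹ * (a * a) * g := by group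
      _ = 1 := by rw [ha]; group
  -- A colouring that separates the two points of each pair, and also those of the preimage
  -- under `g` of each pair.
  obtain ⟨d, hda, hdb⟩ := exists_bool_apply_eq_not_and ha hb hafix
    fun x hx => hafix (g x) (Perm.inv_eq_iff_eq.1 hx)
  have hd (y : Y) (s : Bool) : d (y, s) = (d (y, false) ^^ s) := by
    cases s
    · simp
    · simpa [ha_apply] using hda (y, false)
  have hdg (y : Y) (s : Bool) : d (g⁻¹ (y, s)) = (d (g⁻¹ (y, false)) ^^ s) := by
    cases s
    · simp
    · simpa [ha_apply] using hdb (g⁻¹ (y, false))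
  obtain ⟨σ, hσ⟩ := exists_eq_prodCongrLeft
    (h := signedPerm 1 (fun y => d (g⁻¹ (y, false))) * g * signedPerm 1 fun y => d (y, false))
    (by
      rintro ⟨y, s⟩
      simp only [Perm.mul_apply, signedPerm_apply, Perm.one_apply]
      rw [← Prod.mk.eta (p := g (y, _)), signedPerm_apply, ← hdg, Prod.mk.eta, Perm.coe_inv,
        symm_apply_apply, hd y (_ ^^ _)]
      simp)
  refine ⟨(σ false)⁻¹, fun y => d (g⁻¹ (y, false)), 1, fun y => d (y, false),
    (σ false)⁻¹ * σ true, ?_⟩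
  have hsplit : signedPerm (σ false)⁻¹ (fun y => d (g⁻¹ (y, false))) =
      signedPerm (σ false)⁻¹ (fun _ => false) * signedPerm 1 fun y => d (g⁻¹ (y, false)) :=
    Equiv.ext fun ⟨y, s⟩ => by simp [signedPerm_apply]
  rw [hsplit, mul_assoc, mul_assoc, ← mul_assoc (signedPerm 1 _), hσ]
  ext1 ⟨y, s⟩
  cases s <;> simp [signedPerm_apply, twist_apply]

theorem inv_twist {σ ρ : Perm Y} (hρ : ρ * ρ = 1) (hσ : ρ * σ * ρ⁻¹ = σ⁻¹) :
    (twist σ)⁻¹ = signedPerm ρ (fun _ => false) * twist σ * signedPerm ρ (fun _ => false) := by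
  rw [inv_eq_of_mul_eq_one_left hρ] at hσ
  refine inv_eq_of_mul_eq_one_left (Equiv.ext fun ⟨y, s⟩ => ?_)
  cases s
  · simpa [signedPerm_apply, twist_apply] using Perm.congr_fun hρ y
  · simpa [signedPerm_apply, twist_apply] using Perm.congr_fun hσ (σ y)

theorem signedPerm_mul_twist_eq_iff {σ τ τ' : Perm Y} {f f' : Y → Bool} :
    signedPerm τ f * twist σ = twist σ * signedPerm τ' f' ↔
      f' = f ∧ ∀ y, f (σ y) = f y ∧ τ y = (bif f y then σ (τ' y) else τ' y) ∧
        τ (σ y) = bif f y then τ' y else σ (τ' y) := by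
  simp only [Equiv.ext_iff, Prod.forall, Bool.forall_bool, Perm.mul_apply, twist_apply,
    signedPerm_apply, Prod.ext_iff, funext_iff, cond_true, cond_false, Bool.xor_false,
    Bool.xor_true]
  rw [← forall_and]
  refine forall_congr' fun y => ?_
  cases f y <;> cases f' y <;> simp [and_assoc, and_comm, and_left_comm]

/-- `σ'` arises from `σ` by inverting some of its cycles: `σ` is the product of disjoint
permutations `α` and `β`, and `σ'` that of `α` and `β⁻¹`. -/
def IsPartialInverse (σ σ' : Perm Y) : Prop :=
  ∃ α β, Perm.Disjoint α β ∧ α * β = σ ∧ α * β⁻¹ = σ'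

theorem isPartialInverse_of_signedPerm_mul_twist_eq {σ τ τ' : Perm Y} {f f' : Y → Bool}
    (h : signedPerm τ f * twist σ = twist σ * signedPerm τ' f') :
    IsPartialInverse σ (τ * σ * τ⁻¹) := by
  obtain ⟨-, h⟩ := signedPerm_mul_twist_eq_iff.1 h
  let α := τ * σ * τ'⁻¹
  let β := τ * τ'⁻¹
  have hcases (z : Y) : α z = σ z ∧ β z = z ∨ α z = z ∧ β z = σ z := by
    obtain ⟨-, hβ, hα⟩ := h (τ'⁻¹ z)
    cases hf : f (τ'⁻¹ z)
    · rw [hf, cond_false] at hβ hα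
      left; simp_all [α, β]
    · rw [hf, cond_true] at hβ hα
      right; simp_all [α, β]
  have hdisj : Perm.Disjoint α β := fun z =>
    (hcases z).elim (fun hz => .inr hz.2) fun hz => .inl hz.1
  refine ⟨α, β, hdisj, Equiv.ext fun z => ?_, by simp only [α, β]; group⟩
  rcases hcases z with ⟨hα, hβ⟩ | ⟨hα, hβ⟩
  · rw [Perm.mul_apply, hβ, hα]
  · rw [hdisj.commute.eq, Perm.mul_apply, hα, hβ]

theorem exists_signedPerm_mul_twist_eq {σ τ : Perm Y} (h : IsPartialInverse σ (τ * σ * τ⁻¹)) :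
    ∃ f τ' f', signedPerm τ f * twist σ = twist σ * signedPerm τ' f' := by
  classical
  obtain ⟨α, β, hdisj, hσ, hτ⟩ := h
  have hτσ : τ * σ = α * β⁻¹ * τ := by rw [hτ]; group
  have hβfix (z : Y) : β (α (β⁻¹ z)) = α (β⁻¹ z) ↔ β z = z := by
    have hcomm : β * (α * β⁻¹) = α * β⁻¹ * β := by rw [← mul_assoc, ← hdisj.commute.eq]; group
    have := Perm.congr_fun hcomm z
    simp only [Perm.mul_apply] at this
    rw [this, α.injective.eq_iff, β⁻¹.injective.eq_iff]
  let f : Y → Bool := fun y => decide (β (τ y) ≠ τ y)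
  refine ⟨f, β⁻¹ * τ, f, signedPerm_mul_twist_eq_iff.2 ⟨rfl, fun y => ?_⟩⟩
  have hτσy : τ (σ y) = α (β⁻¹ (τ y)) := Perm.congr_fun hτσ y
  have hσβ : σ ((β⁻¹ * τ) y) = α (τ y) := by rw [← hσ]; simp
  refine ⟨by simp only [f, hτσy, ne_eq, hβfix], ?_⟩
  rw [hτσy, hσβ]
  by_cases hy : β (τ y) = τ y
  · have hy' : β⁻¹ (τ y) = τ y := by rw [Perm.inv_eq_iff_eq, hy]
    simp [-Perm.coe_inv, f, hy, hy']
  · have hα : α (τ y) = τ y := (hdisj (τ y)).resolve_right hy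
    have hα' : α (β⁻¹ (τ y)) = β⁻¹ (τ y) := by
      rw [← Perm.mul_apply, hdisj.commute.inv_right.eq, Perm.mul_apply, hα]
    simp [-Perm.coe_inv, f, hy, hα, hα']

end Pairs

section Reflections

open Finset

variable {Y : Type*} [Fintype Y] [DecidableEq Y]

/-- `ρ` is an involution inverting `σ` that moves only points moved by `σ`; for a cycle, viewed as
a rotation of a polygon, it may be taken to be a reflection fixing a vertex. -/
structure IsReflection (σ ρ : Perm Y) : Prop where
  mul_self : ρ * ρ = 1
  conj_eq_inv : ρ * σ * ρ⁻¹ = σ⁻¹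
  support_subset : ρ.support ⊆ σ.support

theorem exists_apply_zpow_eq_zpow_neg_of_isCycle {σ : Perm Y} (hσ : σ.IsCycle) :
    ∃ (ρ : Perm Y) (x : Y), x ∈ σ.support ∧ (∀ n : ℤ, ρ ((σ ^ n) x) = (σ ^ (-n)) x) ∧
      ρ.support ⊆ σ.support := by
  have hx := Perm.mem_support.2 (Classical.choose_spec hσ).1
  let e := hσ.zpowersEquivSupport
  let r : Perm σ.support := e.permCongr (Equiv.inv (Subgroup.zpowers σ))
  refine ⟨Perm.ofSubtype r, Classical.choose hσ, hx, fun n => ?_, fun y hy => ?_⟩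
  · have hn : (σ ^ n) (Classical.choose hσ) = e ⟨σ ^ n, n, rfl⟩ := rfl
    rw [hn, Perm.ofSubtype_apply_coe, permCongr_apply, symm_apply_apply, zpow_neg]
    rfl
  · by_contra h
    exact Perm.mem_support.1 hy (Perm.ofSubtype_apply_of_not_mem r h)

theorem pow_apply_eq_self_of_pow_two_mul {σ : Perm Y} (hσ : σ.IsCycle) (hodd : Odd #σ.support)
    {x : Y} (hx : x ∈ σ.support) {n : ℕ} (hn : (σ ^ (2 * n)) x = x) : (σ ^ n) x = x := by
  have hx' := Perm.mem_support.1 hx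
  have hdvd : orderOf σ ∣ 2 * n := orderOf_dvd_of_pow_eq_one ((hσ.pow_eq_one_iff' hx').2 hn)
  have hcop : (orderOf σ).Coprime 2 := by rwa [hσ.orderOf, Nat.coprime_two_right]
  exact (hσ.pow_eq_one_iff' hx').1 (orderOf_dvd_iff_pow_eq_one.1 (hcop.dvd_of_dvd_mul_left hdvd))

theorem exists_isReflection_of_isCycle {σ : Perm Y} (hσ : σ.IsCycle) :
    ∃ ρ, IsReflection σ ρ ∧ (Odd #σ.support → Perm.sign ρ = (-1) ^ (#σ.support / 2)) := by
  obtain ⟨ρ, x, hx, hρ, hsupp⟩ := exists_apply_zpow_eq_zpow_neg_of_isCycle hσ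
  have hfix {z : Y} (hz : z ∉ σ.support) : ρ z = z :=
    Perm.notMem_support.1 fun h => hz (hsupp h)
  have hpow {z : Y} (hz : z ∈ σ.support) : ∃ n : ℤ, (σ ^ n) x = z :=
    hσ.sameCycle (Perm.mem_support.1 hx) (Perm.mem_support.1 hz)
  have hmul : ρ * ρ = 1 := Equiv.ext fun z => by
    by_cases hz : z ∈ σ.support
    · obtain ⟨n, rfl⟩ := hpow hz
      rw [Perm.mul_apply, hρ, hρ, neg_neg, Perm.one_apply]
    · rw [Perm.mul_apply, hfix hz, hfix hz, Perm.one_apply]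
  have hconj : ρ * σ = σ⁻¹ * ρ := Equiv.ext fun z => by
    rw [Perm.mul_apply, Perm.mul_apply, Perm.eq_inv_iff_eq]
    by_cases hz : z ∈ σ.support
    · obtain ⟨n, rfl⟩ := hpow hz
      rw [hρ, ← Perm.mul_apply σ (σ ^ n), ← zpow_one_add, hρ, ← Perm.mul_apply, ← zpow_one_add]
      congr 2
      ring
    · rw [Perm.notMem_support.1 hz, hfix hz, Perm.notMem_support.1 hz]
  refine ⟨ρ, ⟨hmul, by rw [hconj, mul_inv_cancel_right], hsupp⟩, fun hodd => ?_⟩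
  have herase : ρ.support = σ.support.erase x := by
    refine (subset_erase.2 ⟨hsupp, ?_⟩).antisymm fun z hz => ?_
    · simpa using hρ 0
    · obtain ⟨hzx, hz⟩ := mem_erase.1 hz
      obtain ⟨n, rfl⟩ := hσ.exists_pow_eq (Perm.mem_support.1 hx) (Perm.mem_support.1 hz)
      refine Perm.mem_support.2 fun h => hzx (pow_apply_eq_self_of_pow_two_mul hσ hodd hx ?_)
      rw [← zpow_natCast, hρ, zpow_neg, Perm.inv_eq_iff_eq, zpow_natCast] at h
      rw [two_mul, pow_add, Perm.mul_apply, ← h]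
  have hcard : Fintype.card Y - Fintype.card (Function.fixedPoints ρ) = #ρ.support := by
    rw [Perm.card_fixedPoints, Perm.sum_cycleType, Nat.sub_sub_self (card_le_univ _)]
  rw [Perm.sign_of_pow_two_eq_one (by rw [pow_two, hmul]), hcard, herase, card_erase_of_mem hx]
  obtain ⟨m, hm⟩ := hodd
  congr 1
  lia

theorem IsReflection.mul {σ τ ρ π : Perm Y} (hd : Perm.Disjoint σ τ) (hρ : IsReflection σ ρ)
    (hπ : IsReflection τ π) : IsReflection (σ * τ) (ρ * π) where
  mul_self := by
    have hρπ := (hd.mono hρ.support_subset hπ.support_subset).commute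
    rw [hρπ.symm.mul_mul_mul_comm, hρ.mul_self, hπ.mul_self, one_mul]
  conj_eq_inv := by
    have hρτ := (hd.mono hρ.support_subset subset_rfl).commute
    have hπσ := (hd.mono subset_rfl hπ.support_subset).commute
    calc ρ * π * (σ * τ) * (ρ * π)⁻¹ = ρ * (π * σ) * (τ * π⁻¹) * ρ⁻¹ := by group
      _ = ρ * σ * (π * τ * π⁻¹ * ρ⁻¹) := by rw [← hπσ.eq]; group
      _ = ρ * σ * ρ⁻¹ * τ⁻¹ := by rw [hπ.conj_eq_inv, ← hρτ.inv_inv.eq]; group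
      _ = (σ * τ)⁻¹ := by rw [hρ.conj_eq_inv, hd.commute.eq, mul_inv_rev]
  support_subset := by
    rw [(hd.mono hρ.support_subset hπ.support_subset).support_mul, hd.support_mul]
    exact union_subset_union hρ.support_subset hπ.support_subset

theorem exists_isReflection (σ : Perm Y) :
    ∃ ρ, IsReflection σ ρ ∧ ((∀ c ∈ σ.cycleType, c % 4 = 1) → Perm.sign ρ = 1) := by
  induction σ using Perm.cycle_induction_on with
  | base_one => exact ⟨1, ⟨rfl, rfl, subset_rfl⟩, fun _ => map_one _⟩
  | base_cycles σ hσ =>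
    obtain ⟨ρ, hρ, hsign⟩ := exists_isReflection_of_isCycle hσ
    refine ⟨ρ, hρ, fun h => ?_⟩
    have hmod : #σ.support % 4 = 1 := h _ (by simp [hσ.cycleType])
    rw [hsign (Nat.odd_iff.2 (by lia))]
    exact Even.neg_one_pow (Nat.even_iff.2 (by lia))
  | induction_disjoint σ τ hd _ hσ hτ =>
    obtain ⟨ρ, hρ, hρ_sign⟩ := hσ
    obtain ⟨π, hπ, hπ_sign⟩ := hτ
    refine ⟨ρ * π, hρ.mul hd hπ, fun h => ?_⟩
    simp only [hd.cycleType_mul, Multiset.mem_add, or_imp, forall_and] at h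
    rw [Perm.sign_mul, hρ_sign h.1, hπ_sign h.2, one_mul]

theorem sign_eq_one_of_isPartialInverse_conj {σ τ : Perm Y} (hmod : ∀ c ∈ σ.cycleType, c % 4 = 1)
    (hcent : Subgroup.centralizer {σ} ≤ alternatingGroup Y)
    (hτ : IsPartialInverse σ (τ * σ * τ⁻¹)) : Perm.sign τ = 1 := by
  obtain ⟨α, β, hdisj, hσ, hinv⟩ := hτ
  obtain ⟨ρ, hρ, hsign⟩ := exists_isReflection β
  have hαρ := (hdisj.mono subset_rfl hρ.support_subset).commute
  have hmem : ρ * τ ∈ Subgroup.centralizer {σ} := by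
    rw [Subgroup.mem_centralizer_singleton_iff, ← mul_inv_eq_iff_eq_mul]
    calc ρ * τ * σ * (ρ * τ)⁻¹ = ρ * (τ * σ * τ⁻¹) * ρ⁻¹ := by group
      _ = α * (ρ * β * ρ⁻¹)⁻¹ := by rw [← hinv, ← mul_assoc, ← hαρ.eq]; group
      _ = σ := by rw [hρ.conj_eq_inv, inv_inv, hσ]
  have hβ : Perm.sign ρ = 1 := hsign fun c hc => hmod c (by
    rw [← hσ, hdisj.cycleType_mul]
    exact Multiset.mem_add.2 (.inr hc))
  simpa [hβ] using Perm.mem_alternatingGroup.1 (hcent hmem)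

theorem exists_isPartialInverse_conj_sign_eq_of_mem_cycleType {σ : Perm Y} {c : ℕ}
    (hc : c ∈ σ.cycleType) (hodd : Odd c) :
    ∃ τ, IsPartialInverse σ (τ * σ * τ⁻¹) ∧ Perm.sign τ = (-1) ^ (c / 2) := by
  obtain ⟨γ, hγ, rfl⟩ := Multiset.mem_map.1 (Perm.cycleType_def σ ▸ hc)
  have hdisj := Perm.disjoint_mul_inv_of_mem_cycleFactorsFinset hγ
  obtain ⟨ρ, hρ, hsign⟩ := exists_isReflection_of_isCycle (Perm.mem_cycleFactorsFinset_iff.1 hγ).1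
  have hρ_comm := (hdisj.mono subset_rfl hρ.support_subset).commute
  refine ⟨ρ, ⟨σ * γ⁻¹, γ, hdisj, inv_mul_cancel_right σ γ, ?_⟩, hsign hodd⟩
  calc σ * γ⁻¹ * γ⁻¹ = σ * γ⁻¹ * ρ * γ * ρ⁻¹ := by rw [← hρ.conj_eq_inv]; group
    _ = ρ * σ * ρ⁻¹ := by rw [hρ_comm.eq]; group

theorem forall_sign_eq_one_of_isPartialInverse_conj_iff {σ : Perm Y} :
    (∀ τ, IsPartialInverse σ (τ * σ * τ⁻¹) → Perm.sign τ = 1) ↔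
      (∀ c ∈ σ.cycleType, c % 4 = 1) ∧ Fintype.card Y ≤ σ.cycleType.sum + 1 ∧
        σ.cycleType.Nodup := by
  rw [Multiset.nodup_iff_count_le_one]
  constructor
  · intro h
    have hcent : Subgroup.centralizer {σ} ≤ alternatingGroup Y := fun τ hτ => by
      refine h τ ⟨σ, 1, Perm.disjoint_one_right σ, mul_one σ, ?_⟩
      rw [Subgroup.mem_centralizer_singleton_iff.1 hτ]
      group
    obtain ⟨hodd, hcard, hcount⟩ := Perm.centralizer_le_alternating_iff.1 hcent
    refine ⟨fun c hc => ?_, hcard, hcount⟩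
    obtain ⟨τ, hτ, hsign⟩ := exists_isPartialInverse_conj_sign_eq_of_mem_cycleType hc (hodd c hc)
    have heven : Even (c / 2) := by
      by_contra hne
      rw [h τ hτ, (Nat.not_even_iff_odd.1 hne).neg_one_pow] at hsign
      exact absurd hsign (by decide)
    obtain ⟨m, hm⟩ := hodd c hc
    obtain ⟨l, hl⟩ := heven
    lia
  · rintro ⟨hmod, hcard, hcount⟩ τ hτ
    refine sign_eq_one_of_isPartialInverse_conj hmod
      (Perm.centralizer_le_alternating_iff.2 ⟨fun c hc => ?_, hcard, hcount⟩) hτ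
    exact Nat.odd_iff.2 (by have := hmod c hc; lia)

end Reflections

section Stabilizer

/-- The sign of the permutation of the pairs induced by an element of `S_2 ≀ Sym Y`. -/
def pairSign (Y : Type*) [Fintype Y] [DecidableEq Y] : pairGroup Y →* ℤˣ :=
  Perm.sign.comp ((MonoidHom.snd _ _).comp (pairGroup Y).subtype)

/-- The action of `S_2 ≀ Sym Y` on a set `X` that `e` identifies with the union of the pairs. -/
def pairAction {X Y : Type*} (e : Y × Bool ≃ X) : pairGroup Y →* Perm X :=
  (e.permCongrHom.toMonoidHom.comp (MonoidHom.fst _ _)).comp (pairGroup Y).subtype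

variable {X Y : Type} [Fintype Y] [DecidableEq Y]

theorem exists_pairAction_mul_eq_iff (e : Y × Bool ≃ X) (σ : Perm Y) :
    (∃ l l', pairAction e l * e.permCongr (twist σ) = e.permCongr (twist σ) * pairAction e l' ∧
      pairSign Y l = -1) ↔ ∃ τ, IsPartialInverse σ (τ * σ * τ⁻¹) ∧ Perm.sign τ = -1 := by
  have hiff (g g' : Perm (Y × Bool)) : e.permCongr g * e.permCongr (twist σ) =
      e.permCongr (twist σ) * e.permCongr g' ↔ g * twist σ = twist σ * g' := by
    rw [← permCongr_mul, ← permCongr_mul, e.permCongr.injective.eq_iff]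
  constructor
  · rintro ⟨⟨⟨g, τ⟩, h⟩, ⟨⟨g', τ'⟩, h'⟩, heq, hsign⟩
    obtain ⟨f, rfl⟩ := mem_pairGroup_iff.1 h
    obtain ⟨f', rfl⟩ := mem_pairGroup_iff.1 h'
    exact ⟨τ, isPartialInverse_of_signedPerm_mul_twist_eq ((hiff _ _).1 heq), hsign⟩
  · rintro ⟨τ, hτ, hsign⟩
    obtain ⟨f, τ', f', heq⟩ := exists_signedPerm_mul_twist_eq hτ
    exact ⟨⟨_, mem_pairGroup_iff.2 ⟨f, rfl⟩⟩, ⟨_, mem_pairGroup_iff.2 ⟨f', rfl⟩⟩,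
      (hiff _ _).2 heq, hsign⟩

theorem isMultFree_map_ker_pairSign_iff [Nontrivial Y] (e : Y × Bool ≃ X) :
    IsMultFree ((pairSign Y).ker.map (pairAction e)) ↔
      ∀ σ : Perm Y, ∃ τ, IsPartialInverse σ (τ * σ * τ⁻¹) ∧ Perm.sign τ = -1 := by
  have := Finite.of_equiv _ e
  have mem (τ : Perm Y) (f : Y → Bool) : (signedPerm τ f, τ) ∈ pairGroup Y :=
    mem_pairGroup_iff.2 ⟨f, rfl⟩
  rw [isMultFree_map_ker_iff_of_doubleCoset_reps (pairAction e) (pairSign Y) ?_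
    (fun σ : Perm Y => e.permCongr (twist σ)) (fun g => ?_) fun σ => ?_]
  · simp only [exists_pairAction_mul_eq_iff]
  · obtain ⟨x, y, hxy⟩ := exists_pair_ne Y
    exact ⟨⟨_, mem (swap x y) fun _ => false⟩, Perm.sign_swap hxy⟩
  · obtain ⟨τ, f, τ', f', σ, h⟩ :=
      exists_signedPerm_mul_mul_signedPerm_eq_twist (e.symm.permCongr g)
    have he : e.permCongr (e.symm.permCongr g) = g := e.permCongr.apply_symm_apply g
    exact ⟨σ, ⟨_, mem τ f⟩, ⟨_, mem τ' f'⟩, by rw [← h, permCongr_mul, permCongr_mul, he]; rfl⟩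
  · obtain ⟨ρ, hρ, -⟩ := exists_isReflection σ
    have hinv := congrArg e.permCongrHom (inv_twist hρ.mul_self hρ.conj_eq_inv)
    rw [map_inv, map_mul, map_mul] at hinv
    exact ⟨⟨_, mem ρ fun _ => false⟩, hinv⟩

end Stabilizer

section CycleTypes

open Finset

variable {Y : Type*} [Fintype Y] [DecidableEq Y]

theorem exists_eq_val_map_of_forall_mod_eq_one {m : Multiset ℕ} (hm : m.Nodup)
    (hmod : ∀ c ∈ m, c % 4 = 1) :
    ∃ S : Finset ℕ, m = S.val.map fun n => 4 * n + 1 := by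
  have hdiv : ∀ c ∈ m, 4 * (c / 4) + 1 = c := fun c hc => by have := hmod c hc; lia
  refine ⟨⟨m.map (· / 4), hm.map_on fun c hc d hd h => ?_⟩, ?_⟩
  · rw [← hdiv c hc, h, hdiv d hd]
  · rw [Multiset.map_map]
    exact ((Multiset.map_congr rfl hdiv).trans (Multiset.map_id' m)).symm

theorem sum_val_map_four_mul_add_one (S : Finset ℕ) :
    (S.val.map fun n => 4 * n + 1).sum = 4 * ∑ n ∈ S, n + #S := by
  change ∑ n ∈ S, (4 * n + 1) = _
  simp [sum_add_distrib, mul_sum]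

theorem exists_perm_cycleType_iff :
    (∃ σ : Perm Y, (∀ c ∈ σ.cycleType, c % 4 = 1) ∧ Fintype.card Y ≤ σ.cycleType.sum + 1 ∧
      σ.cycleType.Nodup) ↔
    ∃ S : Finset ℕ, (∀ n ∈ S, 0 < n) ∧
      (Fintype.card Y = 4 * ∑ n ∈ S, n + #S ∨ Fintype.card Y = 4 * ∑ n ∈ S, n + #S + 1) := by
  simp only [← sum_val_map_four_mul_add_one]
  constructor
  · rintro ⟨σ, hmod, hcard, hnodup⟩
    obtain ⟨S, hS⟩ := exists_eq_val_map_of_forall_mod_eq_one hnodup hmod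
    have hle := σ.sum_cycleType_le
    refine ⟨S, fun n hn => ?_, ?_⟩
    · have := Perm.two_le_of_mem_cycleType (hS ▸ Multiset.mem_map_of_mem _ hn)
      lia
    · rw [← hS]
      lia
  · rintro ⟨S, hpos, hcard⟩
    obtain ⟨σ, hσ⟩ := (Perm.exists_with_cycleType_iff Y (m := S.val.map fun n => 4 * n + 1)).2
      ⟨by lia, by simpa using fun n hn => by have := hpos n hn; lia⟩
    refine ⟨σ, ?_⟩
    rw [hσ]
    refine ⟨by simp +contextual, by lia, S.nodup.map fun a b h => ?_⟩
    simpa using h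

theorem exists_strictAnti_image_eq {α : Type*} [LinearOrder α] (S : Finset α) :
    ∃ b : Fin #S → α, StrictAnti b ∧ univ.image b = S :=
  ⟨S.orderEmbOfFin rfl ∘ Fin.rev,
    (S.orderEmbOfFin rfl).strictMono.comp_strictAnti Fin.rev_strictAnti, by
    rw [← image_image, image_univ_of_surjective Fin.rev_surjective, image_orderEmbOfFin_univ]⟩

theorem exists_strictAnti_iff_exists_finset {k : ℕ} (hk : 2 ≤ k) :
    (∃ (s : ℕ) (b : Fin s → ℕ), 0 < s ∧ StrictAnti b ∧ (∀ i, 0 < b i) ∧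
      (k = 4 * (∑ i, b i) + s ∨ k = 4 * (∑ i, b i) + s + 1)) ↔
    ∃ S : Finset ℕ, (∀ n ∈ S, 0 < n) ∧
      (k = 4 * ∑ n ∈ S, n + #S ∨ k = 4 * ∑ n ∈ S, n + #S + 1) := by
  constructor
  · rintro ⟨s, b, -, hb, hpos, hsum⟩
    refine ⟨univ.image b, by simpa using hpos, ?_⟩
    rwa [sum_image hb.injective.injOn, card_image_of_injective _ hb.injective, card_fin]
  · rintro ⟨S, hpos, hsum⟩
    obtain ⟨b, hb, hbS⟩ := exists_strictAnti_image_eq S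
    have hsum_b : ∑ i, b i = ∑ n ∈ S, n := by
      conv_rhs => rw [← hbS, sum_image hb.injective.injOn]
    refine ⟨#S, b, card_pos.2 ?_, hb, fun i => hpos _ (hbS ▸ mem_image_of_mem b (mem_univ i)), ?_⟩
    · rw [nonempty_iff_ne_empty]
      rintro rfl
      simp only [sum_empty, card_empty] at hsum
      lia
    · rwa [hsum_b]

end CycleTypes

section Fin

/-- The identification of `Fin k × Bool` with `Fin (2 * k)` placing the pair of `j` at `2 * j` and
`2 * j + 1`. -/
def pairEquiv (k : ℕ) : Fin k × Bool ≃ Fin (2 * k) :=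
  ((Equiv.refl _).prodCongr finTwoEquiv.symm).trans
    (finProdFinEquiv.trans (finCongr (Nat.mul_comm k 2)))

theorem pairEquiv_val_div_two {k : ℕ} (x : Fin k × Bool) : (pairEquiv k x : ℕ) / 2 = x.1 := by
  obtain ⟨y, s⟩ := x
  have hval : (pairEquiv k (y, s) : ℕ) = (finTwoEquiv.symm s : ℕ) + 2 * y := rfl
  have := (finTwoEquiv.symm s).isLt
  lia

theorem inducedPairPerm_iff {k : ℕ} {g : Perm (Fin (2 * k))} {τ : Perm (Fin k)} :
    InducedPairPerm g τ ↔ ((pairEquiv k).symm.permCongr g, τ) ∈ pairGroup (Fin k) := by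
  refine (pairEquiv k).forall_congr_right.symm.trans (forall_congr' fun x => ?_)
  have hg := pairEquiv_val_div_two ((pairEquiv k).symm (g (pairEquiv k x)))
  rw [apply_symm_apply] at hg
  simp only [pairEquiv_val_div_two, hg, Fin.val_inj, permCongr_apply, symm_symm]

theorem map_ker_pairSign_eq {k : ℕ} {H : Subgroup (Perm (Fin (2 * k)))}
    (hH : ∀ g, g ∈ H ↔ ∃ σ : Perm (Fin k), InducedPairPerm g σ ∧ Perm.sign σ = 1) :
    (pairSign (Fin k)).ker.map (pairAction (pairEquiv k)) = H := by
  ext g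
  simp only [hH, inducedPairPerm_iff]
  constructor
  · rintro ⟨⟨⟨h, τ⟩, hmem⟩, hsign, rfl⟩
    refine ⟨τ, ?_, hsign⟩
    have hh : (pairEquiv k).symm.permCongr (pairAction (pairEquiv k) ⟨(h, τ), hmem⟩) = h :=
      (pairEquiv k).permCongr.symm_apply_apply h
    rwa [hh]
  · rintro ⟨τ, hmem, hsign⟩
    exact ⟨⟨_, hmem⟩, hsign, (pairEquiv k).permCongr.apply_symm_apply g⟩

end Fin

theorem stmt11 (k : ℕ) (hk : 2 ≤ k)
    -- `H = S_2 ≀ A_k`: the permutations mapping pairs to pairs whose induced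
    -- permutation of the `k` pairs is even
    (H : Subgroup (Equiv.Perm (Fin (2 * k))))
    (hH : ∀ g : Equiv.Perm (Fin (2 * k)), g ∈ H ↔
      ∃ σ : Equiv.Perm (Fin k), InducedPairPerm g σ ∧ Equiv.Perm.sign σ = 1) :
    IsMultFree H ↔
      ¬ ∃ (s : ℕ) (b : Fin s → ℕ), 0 < s ∧ StrictAnti b ∧ (∀ i, 0 < b i) ∧
        (k = 4 * (∑ i, b i) + s ∨ k = 4 * (∑ i, b i) + s + 1) := by
  have : Nontrivial (Fin k) := Fin.nontrivial_iff_two_le.2 hk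
  have hcycle := (exists_congr fun _ => forall_sign_eq_one_of_isPartialInverse_conj_iff).trans
    (exists_perm_cycleType_iff (Y := Fin k))
  rw [Fintype.card_fin] at hcycle
  rw [← map_ker_pairSign_eq hH, isMultFree_map_ker_pairSign_iff,
    exists_strictAnti_iff_exists_finset hk, ← hcycle]
  push Not
  simp only [Int.units_ne_iff_eq_neg]
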